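/- There is a constant C such that for every h ∈ C^∞(ℝ³) and every R > 1: sup_{R/2 < |x| < R} |h(x)| ≤ C R^{−1} Σ_{|α| ≤ 2} ‖Z^α h‖_{L²(R/4 < |x| < 2R)}, where the sum is over all products Z^α of at most 2 vector fields from Z. -/

import Mathlib

noncomputable section

open MeasureTheory Real Set

abbrev E3 : Type := EuclideanSpace ℝ (Fin 3)

/-- Japanese bracket `⟨s⟩ = (1+s²)^{1/2}`. -/
def jb (s : ℝ) : ℝ := Real.sqrt (1 + s ^ 2)

/-- Time derivative `∂_t`. -/
def pdt (w : ℝ → E3 → ℝ) : ℝ → E3 → ℝ := fun t x => deriv (fun s => w s x) t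

/-- Spatial partial derivative `∂_i`. -/
def pdx (i : Fin 3) (w : ℝ → E3 → ℝ) : ℝ → E3 → ℝ :=
  fun t x => fderiv ℝ (fun y => w t y) x (EuclideanSpace.single i 1)

/-- Space-time derivative `∂_α`, with `α = 0` the time derivative. -/
def pd (α : Fin 4) : (ℝ → E3 → ℝ) → ℝ → E3 → ℝ :=
  if h : α = 0 then pdt else pdx (α.pred h)

/-- Radial derivative `∂_r`. -/
def pdr (w : ℝ → E3 → ℝ) : ℝ → E3 → ℝ :=
  fun t x => ∑ i : Fin 3, (x i / ‖x‖) * pdx i w t x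

/-- Scaling vector field `L = t∂_t + r∂_r`. -/
def Lop (w : ℝ → E3 → ℝ) : ℝ → E3 → ℝ :=
  fun t x => t * pdt w t x + ∑ i : Fin 3, x i * pdx i w t x

/-- Rotation vector fields `Ω_{ij} = x_i ∂_j - x_j ∂_i`. -/
def rot (i j : Fin 3) (w : ℝ → E3 → ℝ) : ℝ → E3 → ℝ :=
  fun t x => x i * pdx j w t x - x j * pdx i w t x

/-- The eight admissible vector fields `Γ = {L, Ω_{ij}, ∂_k}`. -/
def gam (k : Fin 8) : (ℝ → E3 → ℝ) → ℝ → E3 → ℝ :=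
  if k = 0 then Lop else if k = 1 then rot 0 1 else if k = 2 then rot 0 2
  else if k = 3 then rot 1 2 else if k = 4 then pd 0 else if k = 5 then pd 1
  else if k = 6 then pd 2 else pd 3

/-- Iterated application of a family of operators along a word. -/
def iterOp {m : ℕ} (F : Fin m → (ℝ → E3 → ℝ) → ℝ → E3 → ℝ) :
    ∀ {n : ℕ}, (Fin n → Fin m) → (ℝ → E3 → ℝ) → ℝ → E3 → ℝ
  | 0, _, w => w
  | _ + 1, μ, w => F (μ 0) (iterOp F (fun i => μ i.succ) w)

/-- `Γ^μ`. -/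
def gamW {n : ℕ} (μ : Fin n → Fin 8) : (ℝ → E3 → ℝ) → ℝ → E3 → ℝ := iterOp gam μ

/-- `∂^μ`. -/
def pdW {n : ℕ} (μ : Fin n → Fin 4) : (ℝ → E3 → ℝ) → ℝ → E3 → ℝ := iterOp pd μ

/-- `|∂w|`: pointwise size of the full space-time gradient. -/
def aGrad (w : ℝ → E3 → ℝ) (t : ℝ) (x : E3) : ℝ := ∑ α : Fin 4, |pd α w t x|

/-- `|∂²w|`. -/
def aGrad2 (w : ℝ → E3 → ℝ) (t : ℝ) (x : E3) : ℝ :=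
  ∑ α : Fin 4, ∑ β : Fin 4, |pd α (pd β w) t x|

/-- `|Γw|`. -/
def aGam (w : ℝ → E3 → ℝ) (t : ℝ) (x : E3) : ℝ := ∑ k : Fin 8, |gam k w t x|

/-- `|∂Γw|`. -/
def aGradGam (w : ℝ → E3 → ℝ) (t : ℝ) (x : E3) : ℝ :=
  ∑ α : Fin 4, ∑ k : Fin 8, |pd α (gam k w) t x|

/-- The d'Alembertian `∂_t² - c²Δ`. -/
def dAlembert (cs : ℝ) (w : ℝ → E3 → ℝ) : ℝ → E3 → ℝ :=
  fun t x => pdt (pdt w) t x - cs ^ 2 * ∑ i : Fin 3, pdx i (pdx i w) t x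

/-- The perturbed d'Alembertian `(□_h u)^I`. -/
def boxH {D : ℕ} (c : Fin D → ℝ) (h : Fin D → Fin D → Fin 4 → Fin 4 → ℝ → E3 → ℝ)
    (u : Fin D → ℝ → E3 → ℝ) (I : Fin D) : ℝ → E3 → ℝ :=
  fun t x => dAlembert (c I) (u I) t x
    + ∑ J, ∑ α, ∑ β, h I J α β t x * pd α (pd β (u J)) t x

/-- The commutator `[P, h^{IJ,γδ}∂_γ∂_δ]u` (the `I`-th component). -/
def commPH {D : ℕ} (P : (ℝ → E3 → ℝ) → ℝ → E3 → ℝ)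
    (h : Fin D → Fin D → Fin 4 → Fin 4 → ℝ → E3 → ℝ)
    (u : Fin D → ℝ → E3 → ℝ) (I : Fin D) : ℝ → E3 → ℝ :=
  fun t x => ∑ J, ∑ γ, ∑ δ,
    (P (fun s y => h I J γ δ s y * pd γ (pd δ (u J)) s y) t x
      - h I J γ δ t x * pd γ (pd δ (P (u J))) t x)

/-- `K` has boundary which is locally the sublevel set of a `C^ord` defining
function with nonvanishing gradient. -/
def HasSmoothBoundary (K : Set E3) (ord : ℕ∞) : Prop :=
  ∀ x ∈ frontier K, ∃ (U : Set E3) (f : E3 → ℝ), IsOpen U ∧ x ∈ U ∧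
    ContDiff ℝ ord f ∧ (∀ y ∈ U, fderiv ℝ f y ≠ 0) ∧ K ∩ U = {y ∈ U | f y ≤ 0}

/-- Star-shaped with respect to the origin. -/
def StarShapedZero (K : Set E3) : Prop :=
  ∀ x ∈ K, ∀ s : ℝ, s ∈ Set.Icc (0:ℝ) 1 → s • x ∈ K

/-- Modified scaling vector field. -/
def Ltilde (η : E3 → ℝ) (w : ℝ → E3 → ℝ) : ℝ → E3 → ℝ :=
  fun t x => t * pdt w t x + η x * ∑ i : Fin 3, x i * pdx i w t x

/-- spatial derivative for functions of `x` only -/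
def sd (i : Fin 3) (f : E3 → ℝ) : E3 → ℝ :=
  fun x => fderiv ℝ f x (EuclideanSpace.single i 1)

def rotS (i j : Fin 3) (f : E3 → ℝ) : E3 → ℝ := fun x => x i * sd j f x - x j * sd i f x

def iterOpS {m : ℕ} (F : Fin m → (E3 → ℝ) → E3 → ℝ) :
    ∀ {n : ℕ}, (Fin n → Fin m) → (E3 → ℝ) → E3 → ℝ
  | 0, _, f => f
  | _ + 1, μ, f => F (μ 0) (iterOpS F (fun i => μ i.succ) f)

def sdW {n : ℕ} (μ : Fin n → Fin 3) : (E3 → ℝ) → E3 → ℝ := iterOpS sd μ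

def zS (k : Fin 6) : (E3 → ℝ) → E3 → ℝ :=
  if k = 0 then rotS 0 1 else if k = 1 then rotS 0 2 else if k = 2 then rotS 1 2
  else if k = 3 then sd 0 else if k = 4 then sd 1 else sd 2

def zSW {n : ℕ} (μ : Fin n → Fin 6) : (E3 → ℝ) → E3 → ℝ := iterOpS zS μ

def zST (k : Fin 7) : (ℝ → E3 → ℝ) → ℝ → E3 → ℝ :=
  if k = 0 then rot 0 1 else if k = 1 then rot 0 2 else if k = 2 then rot 1 2
  else if k = 3 then pd 0 else if k = 4 then pd 1 else if k = 5 then pd 2 else pd 3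

def zSTW {n : ℕ} (μ : Fin n → Fin 7) : (ℝ → E3 → ℝ) → ℝ → E3 → ℝ := iterOp zST μ

/-!
Around a point `r • ω` with `‖ω‖ = 1`, take polar coordinates whose angular chart is the gnomonic
projection. They map a ball of fixed radius into the shell with Jacobian of size `R ^ 2`, and along
each ray through the centre of the ball the image moves by the sum of a translation and an
infinitesimal rotation, that is, along a combination of the fields in `Z` whose coefficients are
bounded independently of `R`. Hence two derivatives of `h` along a ray are controlled by the `Z^α h`
with `|α| ≤ 2`, and `|h (r • ω)| ≤ C ∫ s in 0..1, s * √(Σ |Z^α h|²)`. Averaging over the rays turns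
the right-hand side into an `L²` norm over the ball, because `∫ s in 0..1, s * s ^ (-3 / 2)` is
finite, and the change of variables gains the factor `R⁻¹`.
-/

section Line

variable {F : Type*} [NormedAddCommGroup F] [NormedSpace ℝ F] [CompleteSpace F]

theorem eq_integral_smul_of_hasDerivAt_two {φ φ' φ'' : ℝ → F}
    (hφ : ∀ s ∈ uIcc (0 : ℝ) 1, HasDerivAt φ (φ' s) s)
    (hφ' : ∀ s ∈ uIcc (0 : ℝ) 1, HasDerivAt φ' (φ'' s) s)
    (hint : IntervalIntegrable φ'' volume 0 1) (h1 : φ 1 = 0) (h1' : φ' 1 = 0) :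
    φ 0 = ∫ s in (0 : ℝ)..1, s • φ'' s := by
  have hφ'_int : IntervalIntegrable φ' volume 0 1 :=
    ContinuousOn.intervalIntegrable fun s hs => (hφ' s hs).continuousAt.continuousWithinAt
  rw [intervalIntegral.integral_smul_deriv_eq_deriv_smul (fun s _ => hasDerivAt_id' s) hφ'
    intervalIntegrable_const hint]
  simp only [one_smul, intervalIntegral.integral_eq_sub_of_hasDerivAt hφ hφ'_int, h1, h1']
  simp

/-- The multiplier `(1 - s)²` kills the boundary terms at `s = 1`. -/
theorem eq_integral_smul_cutoff_of_hasDerivAt_two {g g' g'' : ℝ → F}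
    (hg : ∀ s ∈ uIcc (0 : ℝ) 1, HasDerivAt g (g' s) s)
    (hg' : ∀ s ∈ uIcc (0 : ℝ) 1, HasDerivAt g' (g'' s) s)
    (hg'' : ContinuousOn g'' (uIcc 0 1)) :
    g 0 = ∫ s in (0 : ℝ)..1, s • ((1 - s) ^ 2 • g'' s - (4 * (1 - s)) • g' s + (2 : ℝ) • g s) := by
  have hlin (s : ℝ) : HasDerivAt (fun s : ℝ => 1 - s) (-1) s := (hasDerivAt_id' s).const_sub 1
  have hφ (s) (hs : s ∈ uIcc (0 : ℝ) 1) : HasDerivAt (fun s => (1 - s) ^ 2 • g s)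
      ((1 - s) ^ 2 • g' s - (2 * (1 - s)) • g s) s := by
    convert! ((hlin s).fun_pow 2).smul (hg s hs) using 1
    module
  have hφ' (s) (hs : s ∈ uIcc (0 : ℝ) 1) :
      HasDerivAt (fun s => (1 - s) ^ 2 • g' s - (2 * (1 - s)) • g s)
        ((1 - s) ^ 2 • g'' s - (4 * (1 - s)) • g' s + (2 : ℝ) • g s) s := by
    convert! (((hlin s).fun_pow 2).smul (hg' s hs)).sub
      (((hlin s).const_mul 2).smul (hg s hs)) using 1
    module
  have hcont : ContinuousOn g (uIcc 0 1) := fun s hs => (hg s hs).continuousAt.continuousWithinAt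
  have hcont' : ContinuousOn g' (uIcc 0 1) := fun s hs => (hg' s hs).continuousAt.continuousWithinAt
  simpa using eq_integral_smul_of_hasDerivAt_two hφ hφ'
    (ContinuousOn.intervalIntegrable (by fun_prop)) (by simp) (by simp)

theorem norm_le_integral_mul_of_hasDerivAt_two {g g' g'' : ℝ → F} {G : ℝ → ℝ}
    (hg : ∀ s ∈ Icc (0 : ℝ) 1, HasDerivAt g (g' s) s)
    (hg' : ∀ s ∈ Icc (0 : ℝ) 1, HasDerivAt g' (g'' s) s)
    (hg'' : ContinuousOn g'' (Icc 0 1)) (hG : ContinuousOn G (Icc 0 1))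
    (bg : ∀ s ∈ Icc (0 : ℝ) 1, ‖g s‖ ≤ G s) (bg' : ∀ s ∈ Icc (0 : ℝ) 1, ‖g' s‖ ≤ G s)
    (bg'' : ∀ s ∈ Icc (0 : ℝ) 1, ‖g'' s‖ ≤ G s) :
    ‖g 0‖ ≤ 7 * ∫ s in (0 : ℝ)..1, s * G s := by
  rw [← uIcc_of_le zero_le_one] at hg hg' hg'' hG
  rw [eq_integral_smul_cutoff_of_hasDerivAt_two hg hg' hg'',
    ← intervalIntegral.integral_const_mul]
  refine intervalIntegral.norm_integral_le_of_norm_le zero_le_one (.of_forall fun s hs => ?_)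
    (ContinuousOn.intervalIntegrable (by fun_prop))
  obtain ⟨hs0, hs1⟩ := hs
  have hs : s ∈ Icc (0 : ℝ) 1 := ⟨hs0.le, hs1⟩
  calc ‖s • ((1 - s) ^ 2 • g'' s - (4 * (1 - s)) • g' s + (2 : ℝ) • g s)‖
      ≤ s * ((1 - s) ^ 2 * ‖g'' s‖ + 4 * (1 - s) * ‖g' s‖ + 2 * ‖g s‖) := by
        rw [norm_smul, Real.norm_of_nonneg hs0.le]
        gcongr
        refine (norm_add_le _ _).trans (add_le_add ((norm_sub_le _ _).trans_eq ?_) ?_)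
        · rw [norm_smul, norm_smul, Real.norm_of_nonneg (by positivity),
            Real.norm_of_nonneg (by linarith)]
        · rw [norm_smul, Real.norm_of_nonneg zero_le_two]
    _ ≤ s * (1 ^ 2 * G s + 4 * 1 * G s + 2 * G s) := by
        gcongr
        exacts [by linarith, bg'' s hs, by linarith, bg' s hs, bg s hs]
    _ = 7 * (s * G s) := by ring

end Line

section Average

theorem integrableOn_of_continuous_of_isBounded {X : Type*} [PseudoMetricSpace X] [ProperSpace X]
    [MeasurableSpace X] [OpensMeasurableSpace X] {ν : Measure X} [IsFiniteMeasureOnCompacts ν]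
    {f : X → ℝ} (hf : Continuous f) {A : Set X} (hA : Bornology.IsBounded A) :
    IntegrableOn f A ν :=
  (hf.continuousOn.integrableOn_compact' hA.isCompact_closure
    isClosed_closure.measurableSet).mono_set subset_closure

variable {E : Type*} [NormedAddCommGroup E] [NormedSpace ℝ E] [FiniteDimensional ℝ E]
  [MeasurableSpace E] [BorelSpace E] {μ : Measure E} [μ.IsAddHaarMeasure] {f : E → ℝ} {δ s : ℝ}

theorem integrableOn_ball_of_continuous (hf : Continuous f) : IntegrableOn f (Metric.ball 0 δ) μ :=
  integrableOn_of_continuous_of_isBounded hf Metric.isBounded_ball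

open scoped Pointwise in
theorem setAverage_ball_comp_smul_le (hf : Continuous f) (hf0 : ∀ w, 0 ≤ f w)
    (hs : s ∈ Ioc (0 : ℝ) 1) :
    ⨍ v in Metric.ball 0 δ, f (s • v) ∂μ
      ≤ (s ^ Module.finrank ℝ E)⁻¹ * ⨍ v in Metric.ball 0 δ, f v ∂μ := by
  obtain ⟨hs0, hs1⟩ := hs
  have hsub : s • Metric.ball (0 : E) δ ⊆ Metric.ball 0 δ := by
    rintro _ ⟨v, hv, rfl⟩
    rw [mem_ball_zero_iff] at hv ⊢
    rw [norm_smul, Real.norm_of_nonneg hs0.le]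
    nlinarith [norm_nonneg v]
  rw [setAverage_eq, setAverage_eq, Measure.setIntegral_comp_smul_of_pos μ f _ hs0, smul_eq_mul,
    smul_eq_mul, smul_eq_mul, mul_left_comm]
  gcongr ?_ * (?_ * ?_)
  exact setIntegral_mono_set (integrableOn_ball_of_continuous hf) (.of_forall hf0) hsub.eventuallyLE

theorem setAverage_ball_sqrt_comp_smul_le (hf : Continuous f) (hf0 : ∀ w, 0 ≤ f w) (hδ : 0 < δ)
    (hs : s ∈ Ioc (0 : ℝ) 1) :
    ⨍ v in Metric.ball 0 δ, √(f (s • v)) ∂μ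
      ≤ s ^ (-(Module.finrank ℝ E / 2) : ℝ) * √(⨍ v in Metric.ball 0 δ, f v ∂μ) := by
  have hball : μ (Metric.ball 0 δ) ≠ 0 := (Metric.measure_ball_pos μ 0 hδ).ne'
  have : NeZero (μ.restrict (Metric.ball 0 δ)) := ⟨by simpa using hball⟩
  have : IsFiniteMeasure (μ.restrict (Metric.ball 0 δ)) := ⟨by simpa using measure_ball_lt_top⟩
  have hfs : Continuous fun v : E => f (s • v) := by fun_prop
  calc ⨍ v in Metric.ball 0 δ, √(f (s • v)) ∂μ
      ≤ √(⨍ v in Metric.ball 0 δ, f (s • v) ∂μ) :=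
        Real.strictConcaveOn_sqrt.concaveOn.le_map_average continuous_sqrt.continuousOn isClosed_Ici
          (.of_forall fun v => hf0 (s • v)) (integrableOn_ball_of_continuous hfs)
          (integrableOn_ball_of_continuous (continuous_sqrt.comp hfs))
    _ ≤ √((s ^ Module.finrank ℝ E)⁻¹ * ⨍ v in Metric.ball 0 δ, f v ∂μ) :=
        Real.sqrt_le_sqrt (setAverage_ball_comp_smul_le hf hf0 hs)
    _ = s ^ (-(Module.finrank ℝ E / 2) : ℝ) * √(⨍ v in Metric.ball 0 δ, f v ∂μ) := by
        rw [Real.sqrt_mul (by positivity [hs.1]), Real.sqrt_eq_rpow, ← Real.rpow_natCast,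
          ← Real.rpow_neg hs.1.le, ← Real.rpow_mul hs.1.le]
        congr 2
        ring

theorem intervalIntegral_setAverage_ball_comm {F : ℝ → E → ℝ}
    (hF : Continuous (Function.uncurry F)) (a b : ℝ) :
    ∫ s in a..b, ⨍ v in Metric.ball 0 δ, F s v ∂μ
      = ⨍ v in Metric.ball 0 δ, (∫ s in a..b, F s v) ∂μ := by
  have hint : IntegrableOn (Function.uncurry F) (uIoc a b ×ˢ Metric.ball 0 δ) (volume.prod μ) :=
    (hF.continuousOn.integrableOn_compact
      (isCompact_uIcc.prod (isCompact_closedBall 0 δ))).mono_set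
      (prod_mono uIoc_subset_uIcc Metric.ball_subset_closedBall)
  rw [IntegrableOn, ← Measure.prod_restrict] at hint
  simp only [setAverage_eq, intervalIntegral.integral_smul, intervalIntegral_integral_swap hint]

/-- Scaling the ball costs `s ^ (-d)` on `f`, hence by Jensen only `s ^ (-d / 2)` on `√f`: the
weight `s` absorbs it as long as `d < 4`. -/
theorem intervalIntegral_mul_setAverage_ball_sqrt_comp_smul_le (hE : Module.finrank ℝ E < 4)
    (hf : Continuous f) (hf0 : ∀ w, 0 ≤ f w) (hδ : 0 < δ) :
    ∫ s in (0 : ℝ)..1, s * ⨍ v in Metric.ball 0 δ, √(f (s • v)) ∂μ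
      ≤ 2 / (4 - Module.finrank ℝ E) * √(⨍ v in Metric.ball 0 δ, f v ∂μ) := by
  have hd : (Module.finrank ℝ E : ℝ) < 4 := by exact_mod_cast hE
  set d : ℝ := (Module.finrank ℝ E : ℝ)
  set A := ⨍ v in Metric.ball 0 δ, f v ∂μ
  have hweight : -1 < 1 - d / 2 := by linarith
  calc ∫ s in (0 : ℝ)..1, s * ⨍ v in Metric.ball 0 δ, √(f (s • v)) ∂μ
      ≤ ∫ s in (0 : ℝ)..1, s ^ (1 - d / 2) * √A := by
        refine (le_norm_self _).trans (intervalIntegral.norm_integral_le_of_norm_le zero_le_one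
          (.of_forall fun s hs => ?_)
          ((intervalIntegral.intervalIntegrable_rpow' hweight).mul_const _))
        calc ‖s * ⨍ v in Metric.ball 0 δ, √(f (s • v)) ∂μ‖
            = s * ⨍ v in Metric.ball 0 δ, √(f (s • v)) ∂μ :=
              Real.norm_of_nonneg (mul_nonneg hs.1.le (integral_nonneg fun _ => sqrt_nonneg _))
          _ ≤ s * (s ^ (-(d / 2)) * √A) := by
              gcongr
              exacts [hs.1.le, setAverage_ball_sqrt_comp_smul_le hf hf0 hδ hs]
          _ = s ^ (1 - d / 2) * √A := by
              rw [sub_eq_add_neg, Real.rpow_add hs.1, Real.rpow_one, mul_assoc]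
    _ = 2 / (4 - d) * √A := by
        rw [intervalIntegral.integral_mul_const, integral_rpow (.inl hweight), Real.one_rpow,
          Real.zero_rpow (by linarith)]
        congr 1
        field_simp
        ring

theorem le_sqrt_setAverage_of_le_integral_ray (hE : Module.finrank ℝ E < 4) (hf : Continuous f)
    (hf0 : ∀ w, 0 ≤ f w) (hδ : 0 < δ) {a : ℝ}
    (ha : ∀ v ∈ Metric.ball (0 : E) δ, a ≤ ∫ s in (0 : ℝ)..1, s * √(f (s • v))) :
    a ≤ 2 / (4 - Module.finrank ℝ E) * √(⨍ v in Metric.ball 0 δ, f v ∂μ) := by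
  have hF : Continuous (Function.uncurry fun (s : ℝ) (v : E) => s * √(f (s • v))) := by fun_prop
  calc a = ⨍ _v in Metric.ball (0 : E) δ, a ∂μ :=
        (setAverage_const (Metric.measure_ball_pos μ 0 hδ).ne' measure_ball_lt_top.ne a).symm
    _ ≤ ⨍ v in Metric.ball 0 δ, (∫ s in (0 : ℝ)..1, s * √(f (s • v))) ∂μ := by
        rw [setAverage_eq, setAverage_eq]
        refine smul_le_smul_of_nonneg_left (setIntegral_mono_on
          (integrableOn_ball_of_continuous continuous_const)
          (integrableOn_ball_of_continuous ?_) measurableSet_ball ha) (by positivity)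
        exact intervalIntegral.continuous_parametric_intervalIntegral_of_continuous'
          (f := fun v s => s * √(f (s • v))) (hF.comp continuous_swap) 0 1
    _ = ∫ s in (0 : ℝ)..1, s * ⨍ v in Metric.ball 0 δ, √(f (s • v)) ∂μ := by
        rw [← intervalIntegral_setAverage_ball_comm hF]
        simp only [setAverage_eq, integral_const_mul, smul_eq_mul, mul_left_comm]
    _ ≤ 2 / (4 - Module.finrank ℝ E) * √(⨍ v in Metric.ball 0 δ, f v ∂μ) :=
        intervalIntegral_mul_setAverage_ball_sqrt_comp_smul_le hE hf hf0 hδ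

end Average

section ChangeOfVariables

variable {E : Type*} [NormedAddCommGroup E] [NormedSpace ℝ E] [FiniteDimensional ℝ E]
  [MeasurableSpace E] [BorelSpace E] {μ : Measure E} [μ.IsAddHaarMeasure]

theorem mul_setIntegral_comp_le_of_le_abs_det {Φ : E → E} {Φ' : E → E →L[ℝ] E} {B A : Set E}
    {κ : ℝ} {F : E → ℝ} (hB : MeasurableSet B) (hΦ' : ∀ w ∈ B, HasFDerivWithinAt Φ (Φ' w) B w)
    (hinj : InjOn Φ B) (hκ : 0 ≤ κ) (hdet : ∀ w ∈ B, κ ≤ |(Φ' w).det|) (hA : MapsTo Φ B A)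
    (hF0 : ∀ y, 0 ≤ F y) (hF : IntegrableOn F A μ) :
    κ * ∫ w in B, F (Φ w) ∂μ ≤ ∫ y in A, F y ∂μ := by
  rw [← integral_const_mul]
  calc ∫ w in B, κ * F (Φ w) ∂μ
      ≤ ∫ w in B, |(Φ' w).det| • F (Φ w) ∂μ := by
        refine integral_mono_of_nonneg (.of_forall fun w => mul_nonneg hκ (hF0 _))
          ((integrableOn_image_iff_integrableOn_abs_det_fderiv_smul μ hB hΦ' hinj F).mp
            (hF.mono_set hA.image_subset)) ?_
        filter_upwards [ae_restrict_mem hB] with w hw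
        exact mul_le_mul_of_nonneg_right (hdet w hw) (hF0 _)
    _ = ∫ y in Φ '' B, F y ∂μ :=
        (integral_image_eq_integral_abs_det_fderiv_smul μ hB hΦ' hinj F).symm
    _ ≤ ∫ y in A, F y ∂μ :=
        setIntegral_mono_set hF (.of_forall hF0) hA.image_subset.eventuallyLE

end ChangeOfVariables

section Chart

open scoped RealInnerProductSpace

variable {E : Type*} [NormedAddCommGroup E] [InnerProductSpace ℝ E] {ω : E}

/-- For a unit vector `ω`, the orthogonal projection onto the hyperplane `ω^⊥`. -/
def tangentProj (ω : E) : E →L[ℝ] E := .id ℝ E - (innerSL ℝ ω).smulRight ω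

theorem tangentProj_apply (ω w : E) : tangentProj ω w = w - ⟪ω, w⟫ • ω := rfl

theorem inner_tangentProj (hω : ‖ω‖ = 1) (w : E) : ⟪ω, tangentProj ω w⟫ = 0 := by
  simp [tangentProj_apply, inner_sub_right, inner_smul_right, hω]

theorem tangentProj_self (hω : ‖ω‖ = 1) : tangentProj ω ω = 0 := by
  simp [tangentProj_apply, hω]

theorem norm_tangentProj_le (hω : ‖ω‖ = 1) (w : E) : ‖tangentProj ω w‖ ≤ ‖w‖ := by
  have hpyth : ‖w‖ ^ 2 = ⟪ω, w⟫ ^ 2 + ‖tangentProj ω w‖ ^ 2 := by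
    rw [tangentProj_apply, norm_sub_sq_real, inner_smul_right, norm_smul, real_inner_comm ω w, hω,
      mul_one, norm_eq_abs, sq_abs]
    ring
  exact le_of_sq_le_sq (by nlinarith [sq_nonneg ⟪ω, w⟫]) (norm_nonneg w)

/-- The point of the hyperplane tangent to the unit sphere at `ω` that lies over `w`. -/
def tangentPoint (ω w : E) : E := ω + tangentProj ω w

theorem inner_tangentPoint (hω : ‖ω‖ = 1) (w : E) : ⟪ω, tangentPoint ω w⟫ = 1 := by
  simp [tangentPoint, inner_add_right, inner_tangentProj hω, hω]

theorem one_le_norm_tangentPoint (hω : ‖ω‖ = 1) (w : E) : 1 ≤ ‖tangentPoint ω w‖ := by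
  simpa [inner_tangentPoint hω, hω] using real_inner_le_norm ω (tangentPoint ω w)

theorem norm_tangentPoint_le (hω : ‖ω‖ = 1) (w : E) : ‖tangentPoint ω w‖ ≤ 1 + ‖w‖ :=
  (norm_add_le _ _).trans (add_le_add hω.le (norm_tangentProj_le hω w))

theorem tangentPoint_ne_zero (hω : ‖ω‖ = 1) (w : E) : tangentPoint ω w ≠ 0 :=
  norm_pos_iff.mp (one_pos.trans_le (one_le_norm_tangentPoint hω w))

/-- The gnomonic (central) projection onto the unit sphere of the point of the tangent hyperplane
at `ω` that lies over `w`. -/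
def gnomonicDirection (ω w : E) : E := ‖tangentPoint ω w‖⁻¹ • tangentPoint ω w

theorem norm_gnomonicDirection (hω : ‖ω‖ = 1) (w : E) : ‖gnomonicDirection ω w‖ = 1 := by
  rw [gnomonicDirection, norm_smul, norm_inv, norm_norm,
    inv_mul_cancel₀ (norm_ne_zero_iff.mpr (tangentPoint_ne_zero hω w))]

theorem continuous_gnomonicDirection (hω : ‖ω‖ = 1) : Continuous (gnomonicDirection ω) := by
  have hn : Continuous (tangentPoint ω) := by unfold tangentPoint; fun_prop
  exact (hn.norm.inv₀ fun w => norm_ne_zero_iff.mpr (tangentPoint_ne_zero hω w)).smul hn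

/-- Polar coordinates around `r • ω`, with the component of `w` along `ω` as radial variable and
the gnomonic projection as angular chart. -/
def gnomonicPolarChart (ω : E) (r : ℝ) (w : E) : E := (r + ⟪ω, w⟫) • gnomonicDirection ω w

variable {r : ℝ}

theorem gnomonicPolarChart_zero (hω : ‖ω‖ = 1) : gnomonicPolarChart ω r 0 = r • ω := by
  simp [gnomonicPolarChart, gnomonicDirection, tangentPoint, hω]

theorem norm_gnomonicPolarChart (hω : ‖ω‖ = 1) (w : E) :
    ‖gnomonicPolarChart ω r w‖ = |r + ⟪ω, w⟫| := by
  rw [gnomonicPolarChart, norm_smul, norm_gnomonicDirection hω, mul_one, norm_eq_abs]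

theorem abs_inner_lt_of_mem_ball (hω : ‖ω‖ = 1) {w : E} {δ : ℝ} (hw : w ∈ Metric.ball 0 δ) :
    |⟪ω, w⟫| < δ := by
  rw [mem_ball_zero_iff] at hw
  simpa [hω] using (abs_real_inner_le_norm ω w).trans_lt (by simpa [hω] using hw)

theorem norm_gnomonicPolarChart_mem_Ioo (hω : ‖ω‖ = 1) {w : E} {δ : ℝ}
    (hδ : δ < r) (hw : w ∈ Metric.ball 0 δ) :
    ‖gnomonicPolarChart ω r w‖ ∈ Ioo (r - δ) (r + δ) := by
  obtain ⟨hlt, hgt⟩ := abs_lt.mp (abs_inner_lt_of_mem_ball hω hw)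
  rw [norm_gnomonicPolarChart hω, abs_of_pos (by linarith)]
  constructor <;> linarith

theorem continuous_gnomonicPolarChart (hω : ‖ω‖ = 1) : Continuous (gnomonicPolarChart ω r) :=
  (by fun_prop : Continuous fun w : E => r + ⟪ω, w⟫).smul (continuous_gnomonicDirection hω)

theorem injOn_gnomonicPolarChart (hω : ‖ω‖ = 1) :
    InjOn (gnomonicPolarChart ω r) {w | 0 < r + ⟪ω, w⟫} := by
  intro w hw w' hw' heq
  have hrad : ⟪ω, w⟫ = ⟪ω, w'⟫ := by
    have hnorm := congrArg norm heq
    rw [norm_gnomonicPolarChart hω, norm_gnomonicPolarChart hω, abs_of_pos hw,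
      abs_of_pos hw'] at hnorm
    exact add_left_cancel hnorm
  have hray : gnomonicDirection ω w = gnomonicDirection ω w' := by
    rw [gnomonicPolarChart, gnomonicPolarChart, ← hrad] at heq
    exact smul_right_injective E hw.ne' heq
  have hlen : ‖tangentPoint ω w‖⁻¹ = ‖tangentPoint ω w'‖⁻¹ := by
    simpa [gnomonicDirection, inner_smul_right, inner_tangentPoint hω] using
      congrArg (fun y => ⟪ω, y⟫) hray
  have hpoint : tangentPoint ω w = tangentPoint ω w' := by
    rw [gnomonicDirection, gnomonicDirection, hlen] at hray
    exact smul_right_injective E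
      (inv_ne_zero (norm_ne_zero_iff.mpr (tangentPoint_ne_zero hω w'))) hray
  simpa [tangentPoint, tangentProj_apply, hrad] using hpoint

theorem exists_hasFDerivAt_gnomonicPolarChart (hω : ‖ω‖ = 1) (w : E) :
    ∃ ℓ : E →L[ℝ] ℝ, ℓ ω = ‖tangentPoint ω w‖⁻¹ ∧
      HasFDerivAt (gnomonicPolarChart ω r)
        (((r + ⟪ω, w⟫) * ‖tangentPoint ω w‖⁻¹) • tangentProj ω
          + ℓ.smulRight (tangentPoint ω w)) w := by
  have hn : HasFDerivAt (tangentPoint ω) (tangentProj ω) w :=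
    (tangentProj ω).hasFDerivAt.const_add ω
  have hinv := ((contDiffAt_norm ℝ (tangentPoint_ne_zero hω w)).inv
    (norm_ne_zero_iff.mpr (tangentPoint_ne_zero hω w)) |>.differentiableAt
      one_ne_zero).hasFDerivAt.comp w hn
  have hrad : HasFDerivAt (fun w => r + ⟪ω, w⟫) (innerSL ℝ ω) w :=
    (innerSL ℝ ω).hasFDerivAt.const_add r
  have hΦ := (hrad.mul hinv).smul hn
  refine ⟨_, ?_, hΦ.congr_of_eventuallyEq (.of_forall fun w => smul_smul _ _ _)⟩
  simp [tangentProj_self hω, hω]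

theorem det_smul_tangentProj_add_smulRight [FiniteDimensional ℝ E] (hω : ‖ω‖ = 1) {n : E}
    (hn : ⟪ω, n⟫ = 1) {c : ℝ} (hc : c ≠ 0) (ℓ : E →L[ℝ] ℝ) :
    (c • tangentProj ω + ℓ.smulRight n).det = c ^ (Module.finrank ℝ E - 1) * ℓ ω := by
  have : Nontrivial E := ⟨ω, 0, norm_ne_zero_iff.mp (by simp [hω])⟩
  have hfactor : ((c • tangentProj ω + ℓ.smulRight n : E →L[ℝ] E) : E →ₗ[ℝ] E)
      = LinearMap.transvection (innerₛₗ ℝ ω) (n - ω) ∘ₗ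
        (c • LinearMap.transvection (c⁻¹ • (ℓ : E →ₗ[ℝ] ℝ) - innerₛₗ ℝ ω) ω) := by
    ext u
    simp only [ContinuousLinearMap.toLinearMap_add, ContinuousLinearMap.toLinearMap_smul,
      ContinuousLinearMap.coe_smulRight, LinearMap.add_apply, LinearMap.smul_apply,
      ContinuousLinearMap.coe_coe, tangentProj_apply, LinearMap.coe_smulRight, LinearMap.coe_comp,
      LinearMap.coe_smul, Function.comp_apply, Pi.smul_apply, LinearMap.transvection.apply,
      LinearMap.sub_apply, smul_eq_mul, innerₛₗ_apply_apply, smul_add, inner_add_right,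
      inner_smul_right, inner_self_eq_norm_sq_to_K, hω, ringHom_apply, one_pow, mul_one]
    match_scalars <;> field
  rw [ContinuousLinearMap.det, hfactor, LinearMap.det_comp, LinearMap.det_smul,
    LinearMap.transvection.det, LinearMap.transvection.det]
  obtain ⟨d, hd⟩ := Nat.exists_eq_add_of_lt (Module.finrank_pos (R := ℝ) (M := E))
  have hperp : ⟪ω, n - ω⟫ = 0 := by simp [inner_sub_right, hn, hω]
  simp [hd, hperp, hω, pow_succ, mul_assoc, hc]

theorem exists_hasFDerivAt_abs_det_gnomonicPolarChart [FiniteDimensional ℝ E] (hω : ‖ω‖ = 1)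
    {w : E} (hw : 0 < r + ⟪ω, w⟫) :
    ∃ Φ' : E →L[ℝ] E, HasFDerivAt (gnomonicPolarChart ω r) Φ' w ∧
      |Φ'.det| = (r + ⟪ω, w⟫) ^ (Module.finrank ℝ E - 1)
        / ‖tangentPoint ω w‖ ^ Module.finrank ℝ E := by
  obtain ⟨ℓ, hℓ, hΦ'⟩ := exists_hasFDerivAt_gnomonicPolarChart (r := r) hω w
  have : Nontrivial E := ⟨ω, 0, norm_ne_zero_iff.mp (by simp [hω])⟩
  have hn : 0 < ‖tangentPoint ω w‖ := one_pos.trans_le (one_le_norm_tangentPoint hω w)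
  refine ⟨_, hΦ', ?_⟩
  rw [det_smul_tangentProj_add_smulRight hω (inner_tangentPoint hω w) (by positivity), hℓ,
    abs_of_pos (by positivity), mul_pow, mul_assoc, ← pow_succ, Nat.sub_add_cancel
      Module.finrank_pos, inv_pow, div_eq_mul_inv]

variable [FiniteDimensional ℝ E] [MeasurableSpace E] [BorelSpace E] {μ : Measure E}
  [μ.IsAddHaarMeasure]

theorem setIntegral_comp_gnomonicPolarChart_le (hω : ‖ω‖ = 1) {δ : ℝ} (hδ1 : δ ≤ 1) (hδr : δ < r)
    {A : Set E} (hA : MapsTo (gnomonicPolarChart ω r) (Metric.ball 0 δ) A) {F : E → ℝ}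
    (hF0 : ∀ y, 0 ≤ F y) (hF : IntegrableOn F A μ) :
    ∫ w in Metric.ball 0 δ, F (gnomonicPolarChart ω r w) ∂μ
      ≤ 2 ^ Module.finrank ℝ E / (r - δ) ^ (Module.finrank ℝ E - 1) * ∫ y in A, F y ∂μ := by
  set d := Module.finrank ℝ E
  have hrδ : 0 < r - δ := sub_pos.mpr hδr
  have hrad {w : E} (hw : w ∈ Metric.ball 0 δ) : r - δ < r + ⟪ω, w⟫ := by
    linarith [(abs_lt.mp (abs_inner_lt_of_mem_ball hω hw)).1]
  choose! Φ' hΦ' hdet using fun w (hw : w ∈ Metric.ball (0 : E) δ) =>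
    exists_hasFDerivAt_abs_det_gnomonicPolarChart hω (hrδ.trans (hrad hw))
  have hjac (w) (hw : w ∈ Metric.ball (0 : E) δ) : (r - δ) ^ (d - 1) / 2 ^ d ≤ |(Φ' w).det| := by
    have hlen : ‖tangentPoint ω w‖ ≤ 2 := by
      linarith [norm_tangentPoint_le hω w, mem_ball_zero_iff.mp hw]
    have hlen_pos : 0 < ‖tangentPoint ω w‖ := one_pos.trans_le (one_le_norm_tangentPoint hω w)
    rw [hdet w hw]
    exact div_le_div₀ (pow_nonneg (hrδ.trans (hrad hw)).le _)
      (pow_le_pow_left₀ hrδ.le (hrad hw).le _) (by positivity)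
      (pow_le_pow_left₀ hlen_pos.le hlen _)
  rw [← inv_div, ← div_eq_inv_mul, le_div_iff₀' (by positivity)]
  exact mul_setIntegral_comp_le_of_le_abs_det measurableSet_ball
    (fun w hw => (hΦ' w hw).hasFDerivWithinAt)
    ((injOn_gnomonicPolarChart hω).mono fun w hw => hrδ.trans (hrad hw)) (by positivity) hjac hA
    hF0 hF

end Chart

section Ray

open scoped RealInnerProductSpace

variable {E : Type*} [NormedAddCommGroup E] [InnerProductSpace ℝ E]

/-- The infinitesimal rotation `y ↦ ⟪a, y⟫ b - ⟪b, y⟫ a` in the plane spanned by `a` and `b`. -/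
def planeRotation (a b y : E) : E := ⟪a, y⟫ • b - ⟪b, y⟫ • a

theorem norm_planeRotation_le (a b y : E) : ‖planeRotation a b y‖ ≤ 2 * ‖a‖ * ‖b‖ * ‖y‖ := by
  refine (norm_sub_le _ _).trans ?_
  rw [norm_smul, norm_smul]
  nlinarith [mul_le_mul_of_nonneg_right (norm_inner_le_norm (𝕜 := ℝ) a y) (norm_nonneg b),
    mul_le_mul_of_nonneg_right (norm_inner_le_norm (𝕜 := ℝ) b y) (norm_nonneg a)]

theorem planeRotation_smul_smul (a b y : E) (c c' : ℝ) :
    planeRotation a (c • b) (c' • y) = (c * c') • planeRotation a b y := by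
  simp only [planeRotation, inner_smul_right, real_inner_smul_left]
  module

theorem planeRotation_add_smul_left (a b y : E) (c : ℝ) :
    planeRotation (a + c • b) b y = planeRotation a b y := by
  simp only [planeRotation, inner_add_left, real_inner_smul_left]
  module

theorem hasDerivAt_inv_norm_smul {n : ℝ → E} {n' : E} {s : ℝ} (hn : HasDerivAt n n' s)
    (hs : n s ≠ 0) :
    HasDerivAt (fun t => ‖n t‖⁻¹ • n t) ((‖n s‖ ^ 3)⁻¹ • planeRotation (n s) n' (n s)) s := by
  have hlen : ‖n s‖ ≠ 0 := norm_ne_zero_iff.mpr hs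
  have hnorm : HasDerivAt (fun t => ‖n t‖) (⟪n s, n'⟫ / ‖n s‖) s := by
    convert! hn.norm_sq.sqrt (pow_ne_zero 2 hlen) using 1
    · simp
    · rw [sqrt_sq (norm_nonneg _)]
      ring
  convert! (hnorm.fun_inv hlen).smul hn using 1
  rw [planeRotation, real_inner_self_eq_norm_sq, real_inner_comm (n s) n']
  match_scalars <;> field

variable {ω v : E}

/-- The vector `b` for which `planeRotation ω b` is the rotational part of the velocity of
`s ↦ gnomonicPolarChart ω r (s • v)`. -/
def rayTurn (ω v : E) (s : ℝ) : E := (‖tangentPoint ω (s • v)‖ ^ 2)⁻¹ • tangentProj ω v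

theorem hasDerivAt_tangentPoint_smul (s : ℝ) :
    HasDerivAt (fun t : ℝ => tangentPoint ω (t • v)) (tangentProj ω v) s := by
  simpa [tangentPoint] using ((hasDerivAt_id s).smul_const (tangentProj ω v)).const_add ω

theorem hasDerivAt_gnomonicDirection_smul (hω : ‖ω‖ = 1) (s : ℝ) :
    HasDerivAt (fun t : ℝ => gnomonicDirection ω (t • v))
      (planeRotation ω (rayTurn ω v s) (gnomonicDirection ω (s • v))) s := by
  convert! hasDerivAt_inv_norm_smul (hasDerivAt_tangentPoint_smul s)
    (tangentPoint_ne_zero hω (s • v)) using 1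
  have hline : tangentPoint ω (s • v) = ω + s • tangentProj ω v := by simp [tangentPoint]
  nth_rw 2 [hline]
  rw [planeRotation_add_smul_left, rayTurn, gnomonicDirection, planeRotation_smul_smul, ← mul_inv,
    ← pow_succ]

/-- The translational part of the velocity of `s ↦ gnomonicPolarChart ω r (s • v)`. -/
def rayDrift (ω v : E) (s : ℝ) : E := ⟪ω, v⟫ • gnomonicDirection ω (s • v)

theorem hasDerivAt_gnomonicPolarChart_smul (hω : ‖ω‖ = 1) (r s : ℝ) :
    HasDerivAt (fun t : ℝ => gnomonicPolarChart ω r (t • v))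
      (rayDrift ω v s + planeRotation ω (rayTurn ω v s) (gnomonicPolarChart ω r (s • v))) s := by
  have hrad : HasDerivAt (fun t : ℝ => r + ⟪ω, t • v⟫) ⟪ω, v⟫ s := by
    simpa [inner_smul_right] using ((hasDerivAt_id s).mul_const ⟪ω, v⟫).const_add r
  convert! hrad.smul (hasDerivAt_gnomonicDirection_smul (v := v) hω s) using 1
  rw [add_comm]
  congr 1
  simpa [gnomonicPolarChart] using planeRotation_smul_smul ω (rayTurn ω v s)
    (gnomonicDirection ω (s • v)) 1 (r + ⟪ω, s • v⟫)

theorem norm_rayTurn_le (hω : ‖ω‖ = 1) (s : ℝ) : ‖rayTurn ω v s‖ ≤ ‖v‖ := by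
  have hlen : 1 ≤ ‖tangentPoint ω (s • v)‖ ^ 2 := one_le_pow₀ (one_le_norm_tangentPoint hω _)
  rw [rayTurn, norm_smul, norm_inv, norm_pow, norm_norm]
  exact (mul_le_of_le_one_left (norm_nonneg _) (inv_le_one_of_one_le₀ hlen)).trans
    (norm_tangentProj_le hω v)

/-- The derivative of `rayTurn`. -/
def rayTurnDeriv (ω v : E) (s : ℝ) : E :=
  (-(2 * ⟪tangentPoint ω (s • v), tangentProj ω v⟫) / ‖tangentPoint ω (s • v)‖ ^ 4)
    • tangentProj ω v

theorem hasDerivAt_rayTurn (hω : ‖ω‖ = 1) (s : ℝ) :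
    HasDerivAt (rayTurn ω v) (rayTurnDeriv ω v s) s := by
  have hsq := (hasDerivAt_tangentPoint_smul (ω := ω) (v := v) s).norm_sq
  have hlen : ‖tangentPoint ω (s • v)‖ ^ 2 ≠ 0 :=
    pow_ne_zero 2 (norm_ne_zero_iff.mpr (tangentPoint_ne_zero hω _))
  simpa only [rayTurnDeriv, ← pow_mul] using! (hsq.fun_inv hlen).smul_const (tangentProj ω v)

theorem norm_rayTurnDeriv_le (hω : ‖ω‖ = 1) (s : ℝ) : ‖rayTurnDeriv ω v s‖ ≤ 2 * ‖v‖ ^ 2 := by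
  set n := tangentPoint ω (s • v)
  set τ := tangentProj ω v
  have hn : 1 ≤ ‖n‖ := one_le_norm_tangentPoint hω _
  have hτ : ‖τ‖ ≤ ‖v‖ := norm_tangentProj_le hω v
  calc ‖rayTurnDeriv ω v s‖ = 2 * ‖⟪n, τ⟫‖ / ‖n‖ ^ 4 * ‖τ‖ := by
        simp [rayTurnDeriv, norm_smul, n, τ]
    _ ≤ 2 * (‖n‖ * ‖τ‖) / ‖n‖ ^ 4 * ‖τ‖ := by
        gcongr
        exact norm_inner_le_norm n τ
    _ = 2 * ‖τ‖ ^ 2 / ‖n‖ ^ 3 := by field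
    _ ≤ 2 * ‖v‖ ^ 2 / 1 := by
        gcongr
        exact one_le_pow₀ hn
    _ = 2 * ‖v‖ ^ 2 := div_one _

theorem continuous_rayTurnDeriv (hω : ‖ω‖ = 1) : Continuous (rayTurnDeriv ω v) := by
  have hn : Continuous fun s : ℝ => tangentPoint ω (s • v) :=
    continuous_iff_continuousAt.mpr fun s => (hasDerivAt_tangentPoint_smul s).continuousAt
  unfold rayTurnDeriv
  exact ((by fun_prop : Continuous fun s : ℝ => _).div (hn.norm.pow 4)
    fun s => pow_ne_zero 4 (norm_ne_zero_iff.mpr (tangentPoint_ne_zero hω _))).smul continuous_const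

theorem norm_inner_smul_le (hω : ‖ω‖ = 1) (x : E) : ‖⟪ω, v⟫ • x‖ ≤ ‖v‖ * ‖x‖ := by
  rw [norm_smul]
  gcongr
  simpa [hω] using norm_inner_le_norm (𝕜 := ℝ) ω v

theorem norm_rayDrift_le (hω : ‖ω‖ = 1) (s : ℝ) : ‖rayDrift ω v s‖ ≤ ‖v‖ := by
  simpa [rayDrift, norm_gnomonicDirection hω] using
    norm_inner_smul_le hω (gnomonicDirection ω (s • v))

/-- The derivative of `rayDrift`. -/
def rayDriftDeriv (ω v : E) (s : ℝ) : E :=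
  ⟪ω, v⟫ • planeRotation ω (rayTurn ω v s) (gnomonicDirection ω (s • v))

theorem hasDerivAt_rayDrift (hω : ‖ω‖ = 1) (s : ℝ) :
    HasDerivAt (rayDrift ω v) (rayDriftDeriv ω v s) s :=
  (hasDerivAt_gnomonicDirection_smul hω s).fun_const_smul ⟪ω, v⟫

theorem norm_rayDriftDeriv_le (hω : ‖ω‖ = 1) (s : ℝ) : ‖rayDriftDeriv ω v s‖ ≤ 2 * ‖v‖ ^ 2 := by
  have hrot := norm_planeRotation_le ω (rayTurn ω v s) (gnomonicDirection ω (s • v))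
  rw [hω, norm_gnomonicDirection hω] at hrot
  calc ‖rayDriftDeriv ω v s‖
      ≤ ‖v‖ * ‖planeRotation ω (rayTurn ω v s) (gnomonicDirection ω (s • v))‖ :=
        norm_inner_smul_le hω _
    _ ≤ ‖v‖ * (2 * ‖v‖) := by
        gcongr
        linarith [norm_rayTurn_le (v := v) hω s]
    _ = 2 * ‖v‖ ^ 2 := by ring

theorem continuous_rayDriftDeriv (hω : ‖ω‖ = 1) : Continuous (rayDriftDeriv ω v) := by
  have hturn : Continuous (rayTurn ω v) :=
    continuous_iff_continuousAt.mpr fun s => (hasDerivAt_rayTurn hω s).continuousAt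
  have hdir := continuous_gnomonicDirection hω
  unfold rayDriftDeriv planeRotation
  fun_prop

end Ray

section VectorFields

/-- The vector field on `E3` along which `zS k` differentiates. -/
def zField (k : Fin 6) (y : E3) : E3 :=
  let e (i : Fin 3) : E3 := EuclideanSpace.single i 1
  ![y 0 • e 1 - y 1 • e 0, y 0 • e 2 - y 2 • e 0, y 1 • e 2 - y 2 • e 1, e 0, e 1, e 2] k

theorem zS_apply (k : Fin 6) (f : E3 → ℝ) (y : E3) : zS k f y = fderiv ℝ f y (zField k y) := by
  fin_cases k <;> simp [zS, rotS, sd, zField]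

theorem contDiff_zField (k : Fin 6) {n : WithTop ℕ∞} : ContDiff ℝ n (zField k) := by
  unfold zField
  fin_cases k <;> dsimp <;> fun_prop

theorem contDiff_zS {n m : WithTop ℕ∞} (hnm : n + 1 ≤ m) {f : E3 → ℝ} (hf : ContDiff ℝ m f)
    (k : Fin 6) : ContDiff ℝ n (zS k f) := by
  rw [funext (zS_apply k f)]
  exact (hf.fderiv_right hnm).clm_apply (contDiff_zField k)

theorem continuous_zSW {n : ℕ} {f : E3 → ℝ} (hf : ContDiff ℝ n f) (μ : Fin n → Fin 6) :
    Continuous (zSW μ f) := by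
  suffices ∀ m : ℕ, ContDiff ℝ (n + m : ℕ) f → ContDiff ℝ m (zSW μ f) from
    (this 0 (by simpa using hf)).continuous
  clear hf
  induction n with
  | zero => exact fun m hf => by simpa [zSW, iterOpS] using hf
  | succ n ih =>
    intro m hf
    exact contDiff_zS (by norm_cast) (ih _ (m + 1) (by convert! hf using 2; lia)) (μ 0)

/-- The coordinates, in the frame of the six fields `zField`, of the sum of the translation `u`
and the infinitesimal rotation `planeRotation a b`. -/
def motionCoeff (a b u : E3) : Fin 6 → ℝ :=
  ![a 0 * b 1 - a 1 * b 0, a 0 * b 2 - a 2 * b 0, a 1 * b 2 - a 2 * b 1, u 0, u 1, u 2]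

theorem sum_motionCoeff_smul_zField (a b u y : E3) :
    ∑ k, motionCoeff a b u k • zField k y = u + planeRotation a b y := by
  ext i
  fin_cases i <;>
    simp [motionCoeff, zField, planeRotation, Fin.sum_univ_succ, PiLp.inner_apply] <;> ring

theorem abs_motionCoeff_le (a b u : E3) (k : Fin 6) :
    |motionCoeff a b u k| ≤ 2 * ‖a‖ * ‖b‖ + ‖u‖ := by
  have hminor (i j : Fin 3) : |a i * b j - a j * b i| ≤ 2 * ‖a‖ * ‖b‖ := by
    refine (abs_sub _ _).trans ?_
    rw [abs_mul, abs_mul]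
    have (i j : Fin 3) : |a i| * |b j| ≤ ‖a‖ * ‖b‖ :=
      mul_le_mul (PiLp.norm_apply_le a i) (PiLp.norm_apply_le b j) (abs_nonneg _) (norm_nonneg _)
    linarith [this i j, this j i]
  have hcoord (i : Fin 3) : |u i| ≤ ‖u‖ := PiLp.norm_apply_le u i
  fin_cases k
  · exact (hminor 0 1).trans (le_add_of_nonneg_right (norm_nonneg u))
  · exact (hminor 0 2).trans (le_add_of_nonneg_right (norm_nonneg u))
  · exact (hminor 1 2).trans (le_add_of_nonneg_right (norm_nonneg u))
  · exact (hcoord 0).trans (le_add_of_nonneg_left (by positivity))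
  · exact (hcoord 1).trans (le_add_of_nonneg_left (by positivity))
  · exact (hcoord 2).trans (le_add_of_nonneg_left (by positivity))

theorem hasDerivAt_euclideanCoord {b : ℝ → E3} {b' : E3} {s : ℝ} (hb : HasDerivAt b b' s)
    (i : Fin 3) : HasDerivAt (fun t => b t i) (b' i) s :=
  (EuclideanSpace.proj (𝕜 := ℝ) i : E3 →L[ℝ] ℝ).hasFDerivAt.comp_hasDerivAt s hb

theorem hasDerivAt_motionCoeff {a : E3} {b u : ℝ → E3} {b' u' : E3} {s : ℝ}
    (hb : HasDerivAt b b' s) (hu : HasDerivAt u u' s) (k : Fin 6) :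
    HasDerivAt (fun t => motionCoeff a (b t) (u t) k) (motionCoeff a b' u' k) s := by
  have hb := hasDerivAt_euclideanCoord hb
  have hu := hasDerivAt_euclideanCoord hu
  fin_cases k
  · exact ((hb 1).const_mul _).sub ((hb 0).const_mul _)
  · exact ((hb 2).const_mul _).sub ((hb 0).const_mul _)
  · exact ((hb 2).const_mul _).sub ((hb 1).const_mul _)
  · exact hu 0
  · exact hu 1
  · exact hu 2

theorem continuous_motionCoeff (a : E3) (k : Fin 6) :
    Continuous fun p : E3 × E3 => motionCoeff a p.1 p.2 k := by
  fin_cases k <;> simp only [motionCoeff] <;> dsimp <;> fun_prop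

/-- The sum of the squares of all `Z^α h` with `|α| ≤ 2`. -/
def zEnergy (h : E3 → ℝ) (y : E3) : ℝ := ∑ n ∈ Finset.range 3, ∑ μ : Fin n → Fin 6, zSW μ h y ^ 2

theorem zEnergy_nonneg (h : E3 → ℝ) (y : E3) : 0 ≤ zEnergy h y :=
  Finset.sum_nonneg fun _ _ => Finset.sum_nonneg fun _ _ => sq_nonneg _

theorem continuous_zEnergy {h : E3 → ℝ} (hh : ContDiff ℝ 2 h) : Continuous (zEnergy h) := by
  refine continuous_finsetSum _ fun n hn => continuous_finsetSum _ fun μ _ => ?_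
  have hn2 : n ≤ 2 := Nat.lt_succ_iff.mp (Finset.mem_range.mp hn)
  exact (continuous_zSW (hh.of_le (by exact_mod_cast hn2)) μ).pow 2

theorem abs_zSW_le_sqrt_zEnergy (h : E3 → ℝ) (y : E3) {n : ℕ} (hn : n < 3) (μ : Fin n → Fin 6) :
    |zSW μ h y| ≤ √(zEnergy h y) := by
  rw [← sqrt_sq_eq_abs]
  refine sqrt_le_sqrt ((Finset.single_le_sum (f := fun μ : Fin n → Fin 6 => zSW μ h y ^ 2)
    (fun _ _ => sq_nonneg _) (Finset.mem_univ μ)).trans ?_)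
  exact Finset.single_le_sum (f := fun n => ∑ μ : Fin n → Fin 6, zSW μ h y ^ 2)
    (fun _ _ => Finset.sum_nonneg fun _ _ => sq_nonneg _) (Finset.mem_range.mpr hn)

theorem hasDerivAt_comp_of_zField_velocity {f : E3 → ℝ} {y : ℝ → E3} {c : Fin 6 → ℝ} {s : ℝ}
    (hf : DifferentiableAt ℝ f (y s)) (hy : HasDerivAt y (∑ k, c k • zField k (y s)) s) :
    HasDerivAt (fun t => f (y t)) (∑ k, c k * zS k f (y s)) s := by
  simpa [zS_apply] using! hf.hasFDerivAt.comp_hasDerivAt s hy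

theorem abs_sum_mul_le_of_abs_le {ι : Type*} [Fintype ι] {a b : ι → ℝ} {A B : ℝ}
    (ha : ∀ i, |a i| ≤ A) (hb : ∀ i, |b i| ≤ B) :
    |∑ i, a i * b i| ≤ Fintype.card ι * (A * B) := by
  refine (Finset.abs_sum_le_sum_abs _ _).trans
    ((Finset.sum_le_card_nsmul _ _ (A * B) fun i _ => ?_).trans_eq (by simp))
  rw [abs_mul]
  exact mul_le_mul (ha i) (hb i) (abs_nonneg _) ((abs_nonneg _).trans (ha i))

theorem abs_sum_mul_zS_le {c : Fin 6 → ℝ} {M : ℝ} (hc : ∀ k, |c k| ≤ M) (h : E3 → ℝ) (y : E3) :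
    |∑ k, c k * zS k h y| ≤ 6 * M * √(zEnergy h y) := by
  refine (abs_sum_mul_le_of_abs_le hc fun k =>
    abs_zSW_le_sqrt_zEnergy h y (n := 1) (by simp) ![k]).trans_eq ?_
  simp only [Fintype.card_fin]
  push_cast
  ring

theorem abs_sum_mul_sum_mul_zS_zS_le {c : Fin 6 → ℝ} {M : ℝ} (hc : ∀ k, |c k| ≤ M)
    (h : E3 → ℝ) (y : E3) :
    |∑ k, c k * ∑ l, c l * zS l (zS k h) y| ≤ 36 * M ^ 2 * √(zEnergy h y) := by
  refine (abs_sum_mul_le_of_abs_le hc fun k => abs_sum_mul_le_of_abs_le hc fun l =>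
    abs_zSW_le_sqrt_zEnergy h y (n := 2) (by simp) ![l, k]).trans_eq ?_
  simp only [Fintype.card_fin]
  push_cast
  ring

theorem abs_le_integral_sqrt_zEnergy_of_zField_velocity {h : E3 → ℝ} (hh : ContDiff ℝ 2 h)
    {y : ℝ → E3} {c c' : ℝ → Fin 6 → ℝ} {M : ℝ}
    (hy : ∀ s ∈ Icc (0 : ℝ) 1, HasDerivAt y (∑ k, c s k • zField k (y s)) s)
    (hc : ∀ s ∈ Icc (0 : ℝ) 1, ∀ k, HasDerivAt (fun t => c t k) (c' s k) s)
    (hc' : ∀ k, ContinuousOn (fun s => c' s k) (Icc 0 1))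
    (bc : ∀ s ∈ Icc (0 : ℝ) 1, ∀ k, |c s k| ≤ M) (bc' : ∀ s ∈ Icc (0 : ℝ) 1, ∀ k, |c' s k| ≤ M) :
    |h (y 0)| ≤ 7 * ∫ s in (0 : ℝ)..1, s * ((1 + 6 * M + 36 * M ^ 2) * √(zEnergy h (y s))) := by
  have hM : 0 ≤ M := (abs_nonneg _).trans (bc 0 ⟨le_rfl, zero_le_one⟩ 0)
  have hZ (k) : ContDiff ℝ 1 (zS k h) := contDiff_zS one_add_one_eq_two.le hh k
  have hZ_cont (k) : Continuous (zS k h) := (hZ k).continuous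
  have hZZ_cont (k l) : Continuous (zS l (zS k h)) :=
    (contDiff_zS (n := 0) (by simp) (hZ k) l).continuous
  have hE_cont := continuous_zEnergy hh
  have hy_cont : ContinuousOn y (Icc 0 1) := fun s hs => (hy s hs).continuousAt.continuousWithinAt
  have hc_cont (k) : ContinuousOn (fun s => c s k) (Icc 0 1) :=
    fun s hs => (hc s hs k).continuousAt.continuousWithinAt
  have hderiv (s) (hs : s ∈ Icc (0 : ℝ) 1) :=
    hasDerivAt_comp_of_zField_velocity (hh.differentiable two_ne_zero _) (hy s hs)
  have hderiv2 (s) (hs : s ∈ Icc (0 : ℝ) 1) := HasDerivAt.fun_sum fun k (_ : k ∈ Finset.univ) =>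
    (hc s hs k).fun_mul
      (hasDerivAt_comp_of_zField_velocity ((hZ k).differentiable one_ne_zero _) (hy s hs))
  refine norm_le_integral_mul_of_hasDerivAt_two hderiv hderiv2 (by fun_prop) (by fun_prop)
    (fun s _ => ?_) (fun s hs => ?_) fun s hs => ?_
  · refine (abs_zSW_le_sqrt_zEnergy h (y s) (n := 0) (by simp) ![]).trans
      (le_mul_of_one_le_left (sqrt_nonneg _) ?_)
    nlinarith
  · refine (abs_sum_mul_zS_le (bc s hs) h (y s)).trans ?_
    gcongr
    nlinarith
  · rw [Finset.sum_add_distrib]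
    refine (norm_add_le _ _).trans ((add_le_add (abs_sum_mul_zS_le (bc' s hs) h (y s))
      (abs_sum_mul_sum_mul_zS_zS_le (bc s hs) h (y s))).trans ?_)
    rw [← add_mul]
    gcongr
    linarith

end VectorFields

theorem sqrt_sum_le_sum_sqrt {ι : Type*} (s : Finset ι) (f : ι → ℝ) :
    √(∑ i ∈ s, f i) ≤ ∑ i ∈ s, √(f i) := by
  refine sqrt_le_iff.mpr ⟨Finset.sum_nonneg fun i _ => sqrt_nonneg (f i), ?_⟩
  calc ∑ i ∈ s, f i ≤ ∑ i ∈ s, √(f i) ^ 2 :=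
        Finset.sum_le_sum fun i _ => (sqrt_le_left (sqrt_nonneg _)).mp le_rfl
    _ ≤ (∑ i ∈ s, √(f i)) ^ 2 := Finset.sum_sq_le_sq_sum_of_nonneg fun i _ => sqrt_nonneg (f i)

section Sobolev

variable {h : E3 → ℝ} {ω : E3} {r δ : ℝ} {A : Set E3}

theorem abs_apply_smul_le_integral_sqrt_zEnergy (hh : ContDiff ℝ 2 h) (hω : ‖ω‖ = 1) {v : E3}
    (hv : ‖v‖ ≤ 1) :
    |h (r • ω)|
      ≤ 9331 * ∫ s in (0 : ℝ)..1, s * √(zEnergy h (gnomonicPolarChart ω r (s • v))) := by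
  have hv2 : 2 * ‖v‖ ^ 2 ≤ 2 := by nlinarith [norm_nonneg v]
  have hbound {b u : E3} (hb : ‖b‖ ≤ 2) (hu : ‖u‖ ≤ 2) (k : Fin 6) :
      |motionCoeff ω b u k| ≤ 6 :=
    (abs_motionCoeff_le ω b u k).trans (by rw [hω]; linarith)
  have hline := abs_le_integral_sqrt_zEnergy_of_zField_velocity hh
    (y := fun s => gnomonicPolarChart ω r (s • v))
    (fun s _ => by
      rw [sum_motionCoeff_smul_zField]
      exact hasDerivAt_gnomonicPolarChart_smul hω r s)
    (fun s _ => hasDerivAt_motionCoeff (hasDerivAt_rayTurn hω s) (hasDerivAt_rayDrift hω s))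
    (fun k => ((continuous_motionCoeff ω k).comp
      ((continuous_rayTurnDeriv hω).prodMk (continuous_rayDriftDeriv hω))).continuousOn)
    (fun s _ => hbound (by linarith [norm_rayTurn_le (v := v) hω s])
      (by linarith [norm_rayDrift_le (v := v) hω s]))
    (fun s _ => hbound ((norm_rayTurnDeriv_le hω s).trans hv2)
      ((norm_rayDriftDeriv_le hω s).trans hv2))
  simp only [zero_smul, gnomonicPolarChart_zero hω,
    mul_left_comm _ (1 + 6 * 6 + 36 * 6 ^ 2 : ℝ),
    intervalIntegral.integral_const_mul] at hline
  linarith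

theorem abs_apply_smul_le_sqrt_setAverage_zEnergy (hh : ContDiff ℝ 2 h) (hω : ‖ω‖ = 1)
    (hδ : 0 < δ) (hδ1 : δ ≤ 1) :
    |h (r • ω)|
      ≤ 18662 * √(⨍ w in Metric.ball 0 δ, zEnergy h (gnomonicPolarChart ω r w)) := by
  have havg := le_sqrt_setAverage_of_le_integral_ray (μ := volume) (a := |h (r • ω)| / 9331)
    (f := fun w => zEnergy h (gnomonicPolarChart ω r w)) (by simp)
    ((continuous_zEnergy hh).comp (continuous_gnomonicPolarChart (r := r) hω))
    (fun _ => zEnergy_nonneg h _) hδ fun v hv => (div_le_iff₀' (by norm_num)).mpr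
      (abs_apply_smul_le_integral_sqrt_zEnergy hh hω ((mem_ball_zero_iff.mp hv).le.trans hδ1))
  rw [finrank_euclideanSpace_fin] at havg
  push_cast at havg
  linarith

theorem abs_apply_smul_le_sqrt_setIntegral_zEnergy (hh : ContDiff ℝ 2 h) (hω : ‖ω‖ = 1)
    (hδ : 0 < δ) (hδ1 : δ ≤ 1) (hδr : δ < r) (hA_bdd : Bornology.IsBounded A)
    (hA : MapsTo (gnomonicPolarChart ω r) (Metric.ball 0 δ) A) :
    |h (r • ω)| ≤ 18662 * √(8 / volume.real (Metric.ball (0 : E3) δ)) * (r - δ)⁻¹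
      * √(∫ y in A, zEnergy h y) := by
  have hcov := setIntegral_comp_gnomonicPolarChart_le hω hδ1 hδr hA (zEnergy_nonneg h)
    (integrableOn_of_continuous_of_isBounded (ν := volume) (continuous_zEnergy hh) hA_bdd)
  rw [finrank_euclideanSpace_fin] at hcov
  have havg : ⨍ w in Metric.ball 0 δ, zEnergy h (gnomonicPolarChart ω r w)
      ≤ 8 / volume.real (Metric.ball (0 : E3) δ) * (((r - δ) ^ 2)⁻¹ * ∫ y in A, zEnergy h y) := by
    rw [setAverage_eq, smul_eq_mul]
    refine (mul_le_mul_of_nonneg_left hcov (by positivity)).trans_eq ?_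
    ring
  refine (abs_apply_smul_le_sqrt_setAverage_zEnergy hh hω hδ hδ1).trans ?_
  refine (mul_le_mul_of_nonneg_left (sqrt_le_sqrt havg) (by norm_num)).trans_eq ?_
  rw [sqrt_mul (by positivity), sqrt_mul (by positivity), sqrt_inv,
    sqrt_sq (sub_nonneg.mpr hδr.le)]
  ring

theorem sqrt_setIntegral_zEnergy_le (hh : ContDiff ℝ 2 h) (hA : Bornology.IsBounded A) :
    √(∫ y in A, zEnergy h y)
      ≤ ∑ n ∈ Finset.range 3, ∑ μ : Fin n → Fin 6, √(∫ y in A, zSW μ h y ^ 2) := by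
  have hint {n : ℕ} (hn : n ∈ Finset.range 3) (μ : Fin n → Fin 6) :
      IntegrableOn (fun y => zSW μ h y ^ 2) A := by
    refine integrableOn_of_continuous_of_isBounded ((continuous_zSW (hh.of_le ?_) μ).pow 2) hA
    exact_mod_cast Nat.lt_succ_iff.mp (Finset.mem_range.mp hn)
  have hsplit : ∫ y in A, zEnergy h y
      = ∑ n ∈ Finset.range 3, ∑ μ : Fin n → Fin 6, ∫ y in A, zSW μ h y ^ 2 := by
    unfold zEnergy
    rw [integral_finsetSum _ fun n hn => integrable_finsetSum _ fun μ _ => hint hn μ]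
    exact Finset.sum_congr rfl fun n hn => integral_finsetSum _ fun μ _ => hint hn μ
  rw [hsplit]
  exact (sqrt_sum_le_sum_sqrt _ _).trans (Finset.sum_le_sum fun n _ => sqrt_sum_le_sum_sqrt _ _)

end Sobolev

theorem stmt_8_general {R₀ : ℝ} (hR₀ : 0 < R₀) :
    ∃ C : ℝ, 0 < C ∧
      ∀ h : E3 → ℝ, ContDiff ℝ 2 h →
        ∀ R : ℝ, R₀ < R → ∀ x : E3, R / 2 < ‖x‖ → ‖x‖ < R →
          |h x| ≤ C * R⁻¹ *
            ∑ n ∈ Finset.range 3, ∑ μ : Fin n → Fin 6,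
              √(∫ y in {y : E3 | R / 4 < ‖y‖ ∧ ‖y‖ < 2 * R}, zSW μ h y ^ 2) := by
  set δ := min 1 (R₀ / 4)
  have hδ : 0 < δ := by positivity
  have hδ1 : δ ≤ 1 := min_le_left _ _
  have hδR₀ : δ ≤ R₀ / 4 := min_le_right _ _
  have hV : 0 < volume.real (Metric.ball (0 : E3) δ) :=
    ENNReal.toReal_pos (Metric.measure_ball_pos volume 0 hδ).ne' measure_ball_lt_top.ne
  refine ⟨18662 * √(8 / volume.real (Metric.ball (0 : E3) δ)) * 4, by positivity, ?_⟩
  intro h hh R hR x hRx hxR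
  set A := {y : E3 | R / 4 < ‖y‖ ∧ ‖y‖ < 2 * R}
  have hx : 0 < ‖x‖ := by linarith
  have hA_bdd : Bornology.IsBounded A :=
    isBounded_iff_forall_norm_le.mpr ⟨2 * R, fun y hy => hy.2.le⟩
  have hω : ‖‖x‖⁻¹ • x‖ = 1 := norm_smul_inv_norm (𝕜 := ℝ) (norm_pos_iff.mp hx)
  have hA : MapsTo (gnomonicPolarChart (‖x‖⁻¹ • x) ‖x‖) (Metric.ball 0 δ) A := fun w hw => by
    obtain ⟨hlow, hup⟩ := norm_gnomonicPolarChart_mem_Ioo hω (r := ‖x‖) (by linarith) hw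
    constructor <;> linarith
  have hpoint := abs_apply_smul_le_sqrt_setIntegral_zEnergy hh hω hδ hδ1 (by linarith) hA_bdd hA
  rw [smul_inv_smul₀ hx.ne'] at hpoint
  have hinv : (‖x‖ - δ)⁻¹ ≤ 4 * R⁻¹ := by
    rw [← div_eq_mul_inv, inv_eq_one_div, div_le_div_iff₀ (by linarith) (by linarith)]
    linarith
  rw [mul_assoc _ 4]
  exact hpoint.trans (mul_le_mul (by gcongr) (sqrt_setIntegral_zEnergy_le hh hA_bdd)
    (sqrt_nonneg _) (by positivity [hx.trans hxR]))

/-- weighted Sobolev estimate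
`sup_{R/2<|x|<R} |h| ≤ C R⁻¹ Σ_{|α|≤2} ‖Z^α h‖_{L²(R/4<|x|<2R)}`. -/
theorem stmt_8 :
    ∃ C : ℝ, 0 < C ∧
      ∀ h : E3 → ℝ, ContDiff ℝ (⊤ : ℕ∞) h →
        ∀ R : ℝ, 1 < R → ∀ x : E3, R / 2 < ‖x‖ → ‖x‖ < R →
          |h x| ≤ C * R⁻¹ *
            ∑ n ∈ Finset.range 3, ∑ μ : Fin n → Fin 6,
              Real.sqrt (∫ y in {y : E3 | R / 4 < ‖y‖ ∧ ‖y‖ < 2 * R}, (zSW μ h y) ^ 2) := by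
  obtain ⟨C, hC, hsobolev⟩ := stmt_8_general one_pos
  exact ⟨C, hC, fun h hh => hsobolev h (contDiff_infty.mp hh 2)⟩
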